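/- Let S ⊂ ℝ^k be a halfspace and let Σ ⊆ S be an additive semigroup containing 0. Then the maximal ideal space M(AP^k_Σ) of the Banach algebra AP^k_Σ is a contractible topological space. -/

import Mathlib

/- Almost periodic functions of `k` real variables, their Bohr-Fourier
coefficients and spectra, the Wiener algebra, and halfspaces. -/

open MeasureTheory Filter BoundedContinuousFunction

noncomputable section

/-- The Banach algebra of bounded continuous functions `ℝ^k → ℂ` (sup norm). -/
abbrev APB (k : ℕ) := BoundedContinuousFunction (Fin k → ℝ) ℂ

/-- The elementary exponential `e_λ(x) = e^{i⟨λ,x⟩}` as a bounded continuous function. -/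
def apExp (k : ℕ) (lam : Fin k → ℝ) : APB k :=
  BoundedContinuousFunction.ofNormedAddCommGroup
    (fun x => Complex.exp (Complex.I * ((∑ j, lam j * x j : ℝ) : ℂ)))
    (by fun_prop) 1
    (fun x => by
      simp only [Complex.norm_exp, Complex.mul_re, Complex.I_re, Complex.I_im, Complex.ofReal_im,
        zero_mul, mul_zero, sub_zero, Real.exp_zero, le_refl])

/-- `AP^k`: the closed subalgebra of `L^∞`-type bounded continuous functions
generated by all exponentials `e_λ`, `λ ∈ ℝ^k`. -/
def APalg (k : ℕ) : Subalgebra ℂ (APB k) :=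
  (Algebra.adjoin ℂ (Set.range (apExp k))).topologicalClosure

/-- The Bohr-Fourier coefficient
`f_λ = lim_{T→∞} (2T)^{-k} ∫_{[-T,T]^k} e^{-i⟨λ,x⟩} f(x) dx`. -/
def bohrCoeff (k : ℕ) (f : (Fin k → ℝ) → ℂ) (lam : Fin k → ℝ) : ℂ :=
  limUnder atTop (fun T : ℝ =>
    (((2 * T) ^ k : ℝ) : ℂ)⁻¹ *
      ∫ x in Set.Icc (fun _ => -T : Fin k → ℝ) (fun _ => T),
        Complex.exp (-(Complex.I * ((∑ j, lam j * x j : ℝ) : ℂ))) * f x)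

/-- The Bohr-Fourier spectrum `σ(f) = {λ : f_λ ≠ 0}`. -/
def bohrSpectrum (k : ℕ) (f : (Fin k → ℝ) → ℂ) : Set (Fin k → ℝ) :=
  {lam | bohrCoeff k f lam ≠ 0}

/-- Membership in `AP^k_Δ = {f ∈ AP^k : σ(f) ⊆ Δ}`. -/
def APmem (k : ℕ) (Δ : Set (Fin k → ℝ)) (f : APB k) : Prop :=
  f ∈ APalg k ∧ bohrSpectrum k ⇑f ⊆ Δ

/-- Membership in the Wiener algebra `APW^k_Δ`: almost periodic with spectrum
in `Δ` and absolutely convergent Bohr-Fourier series. -/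
def APWmem (k : ℕ) (Δ : Set (Fin k → ℝ)) (f : APB k) : Prop :=
  APmem k Δ f ∧ Summable (fun lam => ‖bohrCoeff k (⇑f) lam‖)

/-- The Wiener norm `‖f‖_W = ∑_λ |f_λ|`. -/
def wienerNorm (k : ℕ) (f : (Fin k → ℝ) → ℂ) : ℝ :=
  ∑' lam, ‖bohrCoeff k f lam‖

/-- A halfspace `S ⊂ ℝ^k`: `ℝ^k = S ∪ (-S)`, `S ∩ (-S) = {0}`, and `S` is
closed under addition and under multiplication by nonnegative reals. -/
structure IsHalfspace (k : ℕ) (S : Set (Fin k → ℝ)) : Prop where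
  union : S ∪ -S = Set.univ
  inter : S ∩ -S = {0}
  add_mem : ∀ x ∈ S, ∀ y ∈ S, x + y ∈ S
  smul_mem : ∀ x ∈ S, ∀ a : ℝ, 0 ≤ a → a • x ∈ S

/- The maximal ideal space of a subalgebra of bounded continuous functions,
realized as the set of nonzero multiplicative linear functionals on the given
carrier set, with the weak* (pointwise convergence) topology. -/

/-- The maximal ideal space of the (sub)algebra with carrier `Sset`: nonzero
multiplicative linear functionals `φ : Sset → ℂ`.  The topology (weak*) is the
subspace topology of pointwise convergence. -/
def apCharacters (k : ℕ) (Sset : Set (APB k)) : Set (↥Sset → ℂ) :=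
  {φ | φ ≠ 0 ∧
    (∀ (f g : ↥Sset) (h : (f : APB k) + (g : APB k) ∈ Sset),
      φ ⟨(f : APB k) + (g : APB k), h⟩ = φ f + φ g) ∧
    (∀ (c : ℂ) (f : ↥Sset) (h : c • (f : APB k) ∈ Sset),
      φ ⟨c • (f : APB k), h⟩ = c * φ f) ∧
    (∀ (f g : ↥Sset) (h : (f : APB k) * (g : APB k) ∈ Sset),
      φ ⟨(f : APB k) * (g : APB k), h⟩ = φ f * φ g)}

/-
Let `M` be an additive submonoid of a salient convex cone. Averaging against Fejér kernels built
from Følner sets of `ℝ^k` shows that `AP^k_M` is the closed span of the `e_m`, `m ∈ M`. Hence its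
characters are the semicharacters `χ` of `M` with `‖∑ c_m χ(m)‖ ≤ ‖∑ c_m e_m‖`. Applying this
inequality to translates, each such `χ` acts as a contractive Fourier multiplier, so they form a
topological monoid under pointwise multiplication; the indicator of `{0}` is a zero of this monoid,
and a path from it to the unit contracts the whole monoid.

The path runs through indicators of subspaces `W`. As long as `W ≠ 0`, a salient cone admits a
functional `f` on `W` that is nonzero and nonnegative on the cone. The Phragmén-Lindelöf principle
shows that `r ^ f(m)`, `0 < r ≤ 1`, is again a contractive multiplier on `W`, and `r → 0` leads from
the indicator of `W` to that of `W ∩ ker f`.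
-/

open Topology

section SalientCones

variable {V : Type*} [NormedAddCommGroup V] [NormedSpace ℝ V] [FiniteDimensional ℝ V]

theorem closure_ne_univ_of_salient [Nontrivial V] {C : PointedCone ℝ V}
    (hC : (C : ConvexCone ℝ V).Salient) : closure (C : Set V) ≠ Set.univ := by
  intro hdense
  have hconv : Convex ℝ (C : Set V) := (C : ConvexCone ℝ V).convex
  have hspan : affineSpan ℝ (C : Set V) = ⊤ := by
    rw [← SetLike.coe_set_eq, AffineSubspace.top_coe, ← Set.univ_subset_iff, ← hdense]
    exact closure_minimal (subset_affineSpan ℝ _)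
      (AffineSubspace.closed_of_finiteDimensional _)
  have hint := hconv.interior_nonempty_iff_affineSpan_eq_top.2 hspan
  have huniv : (C : Set V) = Set.univ := by
    rw [← Set.univ_subset_iff, ← interior_univ, ← hdense,
      hconv.interior_closure_eq_interior_of_nonempty_interior hint]
    exact interior_subset
  have hmem : ∀ x, x ∈ C := fun x => SetLike.mem_coe.1 (huniv ▸ Set.mem_univ x)
  obtain ⟨x, hx⟩ := exists_ne (0 : V)
  exact hC x (hmem x) hx (hmem (-x))

theorem exists_dual_nonneg_of_salient [Nontrivial V] {C : PointedCone ℝ V}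
    (hC : (C : ConvexCone ℝ V).Salient) :
    ∃ f : Module.Dual ℝ V, f ≠ 0 ∧ ∀ x ∈ C, 0 ≤ f x := by
  obtain ⟨x₀, hx₀⟩ := (Set.ne_univ_iff_exists_notMem _).1 (closure_ne_univ_of_salient hC)
  let K : ProperCone ℝ V := ⟨C.closure, isClosed_closure⟩
  obtain ⟨f, hf, hfx₀⟩ := K.hyperplane_separation_point hx₀
  refine ⟨f, ?_, fun x hx => hf x (subset_closure hx)⟩
  intro h
  exact hfx₀.ne (LinearMap.congr_fun h x₀)

theorem exists_dual_nonneg_on_submodule_of_salient {C : PointedCone ℝ V}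
    (hC : (C : ConvexCone ℝ V).Salient) {W : Submodule ℝ V} (hW : W ≠ ⊥) :
    ∃ f : Module.Dual ℝ V, (∀ x ∈ C, x ∈ W → 0 ≤ f x) ∧ ∃ w ∈ W, f w ≠ 0 := by
  have : Nontrivial W := Submodule.nontrivial_iff_ne_bot.2 hW
  have hCW : ((C.comap W.subtype : PointedCone ℝ W) : ConvexCone ℝ W).Salient :=
    fun w hw hw0 => hC w hw (by simpa using hw0)
  obtain ⟨g, hg, hgC⟩ := exists_dual_nonneg_of_salient hCW
  obtain ⟨f, rfl⟩ := g.exists_extend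
  obtain ⟨w, hw⟩ := DFunLike.ne_iff.1 hg
  exact ⟨f, fun x hxC hxW => hgC ⟨x, hxW⟩ hxC, w, w.2, hw⟩

end SalientCones

section ContractiveSemicharacters

theorem map_mul_of_dense_span {A : Type*} [NormedRing A] [NormedAlgebra ℂ A] {s : Set A}
    (hs : Dense (Submodule.span ℂ s : Set A)) {Φ : StrongDual ℂ A}
    (hΦ : ∀ a ∈ s, ∀ b ∈ s, Φ (a * b) = Φ a * Φ b) (a b : A) : Φ (a * b) = Φ a * Φ b := by
  have hleft : ∀ a ∈ s, ∀ b, Φ (a * b) = Φ a * Φ b := fun a ha b => by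
    have h : Φ ∘L ContinuousLinearMap.mul ℂ A a = Φ a • Φ :=
      ContinuousLinearMap.ext_on hs (hΦ a ha)
    exact DFunLike.congr_fun h b
  have h : Φ ∘L (ContinuousLinearMap.mul ℂ A).flip b = Φ b • Φ :=
    ContinuousLinearMap.ext_on hs fun a ha => (hleft a ha b).trans (mul_comm _ _)
  exact (DFunLike.congr_fun h a).trans (mul_comm _ _)

variable {G A : Type*} [AddMonoid G] [NormedRing A] [NormedAlgebra ℂ A]

/-- The functions `χ : G → ℂ` that turn addition into multiplication and for which
`∑ c g • e g ↦ ∑ c g * χ g` is a contraction. For an algebra `A` topologically generated by `e`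
they are the restrictions of the characters of `A` to the generators. -/
def contractiveSemicharacters (e : AddChar G A) : Set (G → ℂ) :=
  {χ | χ 0 = 1 ∧ (∀ g h, χ (g + h) = χ g * χ h) ∧
    ∀ (s : Finset G) (c : G → ℂ), ‖∑ g ∈ s, c g * χ g‖ ≤ ‖∑ g ∈ s, c g • e g‖}

theorem isClosed_contractiveSemicharacters (e : AddChar G A) :
    IsClosed (contractiveSemicharacters e) := by
  simp only [contractiveSemicharacters, Set.ofPred_and, Set.ofPred_forall]
  refine (isClosed_eq (by fun_prop) (by fun_prop)).inter (IsClosed.inter ?_ ?_)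
  · exact isClosed_iInter fun g => isClosed_iInter fun h => isClosed_eq (by fun_prop) (by fun_prop)
  · exact isClosed_iInter fun s => isClosed_iInter fun c => isClosed_le (by fun_prop) (by fun_prop)

theorem exists_strongDual_of_mem_contractiveSemicharacters {e : AddChar G A}
    (he : Dense (Submodule.span ℂ (Set.range e) : Set A)) {χ : G → ℂ}
    (hχ : χ ∈ contractiveSemicharacters e) : ∃ Φ : StrongDual ℂ A, ∀ g, Φ (e g) = χ g := by
  let ev : (G →₀ ℂ) →ₗ[ℂ] A := Finsupp.linearCombination ℂ e
  let L : (G →₀ ℂ) →ₗ[ℂ] ℂ := Finsupp.linearCombination ℂ χ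
  have hev : DenseRange ev := by
    rwa [DenseRange, ← LinearMap.coe_range, Finsupp.range_linearCombination]
  have hL : ∃ C, ∀ p, ‖L p‖ ≤ C * ‖ev p‖ := ⟨1, fun p => by
    simpa only [ev, L, Finsupp.linearCombination_apply, Finsupp.sum, smul_eq_mul, one_mul] using
      hχ.2.2 p.support p⟩
  refine ⟨L.extendOfNorm ev, fun g => ?_⟩
  have hg := LinearMap.extendOfNorm_eq hev hL (Finsupp.single g 1)
  simpa only [ev, L, Finsupp.linearCombination_single, one_smul] using hg

theorem exists_character_of_mem_contractiveSemicharacters {e : AddChar G A}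
    (he : Dense (Submodule.span ℂ (Set.range e) : Set A)) {χ : G → ℂ}
    (hχ : χ ∈ contractiveSemicharacters e) :
    ∃ φ : WeakDual.characterSpace ℂ A, ∀ g, φ (e g) = χ g := by
  obtain ⟨Φ, hΦ⟩ := exists_strongDual_of_mem_contractiveSemicharacters he hχ
  have hone : Φ 1 = 1 := by rw [← e.map_zero_eq_one, hΦ, hχ.1]
  have hmul : ∀ a b, Φ (a * b) = Φ a * Φ b := by
    refine map_mul_of_dense_span he ?_
    rintro _ ⟨g, rfl⟩ _ ⟨h, rfl⟩
    rw [← e.map_add_eq_mul, hΦ, hΦ, hΦ, hχ.2.1]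
  refine ⟨⟨StrongDual.toWeakDual Φ, ?_⟩, hΦ⟩
  rw [WeakDual.CharacterSpace.eq_set_map_one_map_mul]
  exact ⟨hone, hmul⟩

variable [NormOneClass A] [CompleteSpace A]

theorem character_comp_mem_contractiveSemicharacters (e : AddChar G A)
    (φ : WeakDual.characterSpace ℂ A) : (fun g => φ (e g)) ∈ contractiveSemicharacters e := by
  refine ⟨by simp, fun g h => by simp only [e.map_add_eq_mul, map_mul], fun s c => ?_⟩
  calc ‖∑ g ∈ s, c g * φ (e g)‖ = ‖φ (∑ g ∈ s, c g • e g)‖ := by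
        simp only [map_sum, map_smul, smul_eq_mul]
    _ ≤ ‖∑ g ∈ s, c g • e g‖ := AlgHom.norm_apply_le_self φ _

/-- Restriction of characters to the generators `e g` of a Banach algebra, as a homeomorphism. -/
def characterSpaceHomeomorphContractiveSemicharacters {e : AddChar G A}
    (he : Dense (Submodule.span ℂ (Set.range e) : Set A)) :
    WeakDual.characterSpace ℂ A ≃ₜ contractiveSemicharacters e :=
  let restrict : WeakDual.characterSpace ℂ A → contractiveSemicharacters e :=
    fun φ => ⟨fun g => φ (e g), character_comp_mem_contractiveSemicharacters e φ⟩
  have hcont : Continuous restrict := Continuous.subtype_mk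
    (continuous_pi fun g => (WeakDual.eval_continuous (e g)).comp continuous_subtype_val) _
  have hinj : Function.Injective restrict := fun φ ψ h =>
    WeakDual.CharacterSpace.ext fun a => by
      have heq : WeakDual.CharacterSpace.toCLM φ = WeakDual.CharacterSpace.toCLM ψ :=
        ContinuousLinearMap.ext_on he (Set.forall_mem_range.2 (congrFun (congrArg Subtype.val h)))
      exact DFunLike.congr_fun heq a
  have hsurj : Function.Surjective restrict := fun χ => by
    obtain ⟨φ, hφ⟩ := exists_character_of_mem_contractiveSemicharacters he χ.2
    exact ⟨φ, Subtype.ext (funext hφ)⟩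
  Continuous.homeoOfEquivCompactToT2 (f := .ofBijective restrict ⟨hinj, hsurj⟩) hcont

end ContractiveSemicharacters

section ClosedAdjoin

variable {G B : Type*} [AddMonoid G] [NormedRing B] [NormedAlgebra ℂ B]

/-- The closed subalgebra generated by the values of an additive character. -/
def closedAdjoin (e : AddChar G B) : Subalgebra ℂ B :=
  (Algebra.adjoin ℂ (Set.range e)).topologicalClosure

theorem adjoin_range_addChar_toSubmodule (e : AddChar G B) :
    Subalgebra.toSubmodule (Algebra.adjoin ℂ (Set.range e)) = Submodule.span ℂ (Set.range e) := by
  have hrange : (Submonoid.closure (Set.range e) : Set B) = Set.range e :=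
    congrArg SetLike.coe (MonoidHom.mrange e.toMonoidHom).closure_eq
  rw [Algebra.adjoin_eq_span, hrange]

theorem coe_closedAdjoin (e : AddChar G B) :
    (closedAdjoin e : Set B) = closure (Submodule.span ℂ (Set.range e) : Set B) := by
  rw [← adjoin_range_addChar_toSubmodule]
  rfl

theorem apply_mem_closedAdjoin (e : AddChar G B) (g : G) : e g ∈ closedAdjoin e :=
  Subalgebra.le_topologicalClosure _ (Algebra.subset_adjoin (Set.mem_range_self g))

/-- The additive character `e` with values in the closed subalgebra that it generates. -/
def closedAdjoinChar (e : AddChar G B) : AddChar G (closedAdjoin e) where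
  toFun g := ⟨e g, apply_mem_closedAdjoin e g⟩
  map_zero_eq_one' := Subtype.ext e.map_zero_eq_one
  map_add_eq_mul' g h := Subtype.ext (e.map_add_eq_mul g h)

theorem dense_span_range_closedAdjoinChar (e : AddChar G B) :
    Dense (Submodule.span ℂ (Set.range (closedAdjoinChar e)) : Set (closedAdjoin e)) := by
  have himage : ((↑) : closedAdjoin e → B) '' Submodule.span ℂ (Set.range (closedAdjoinChar e)) =
      Submodule.span ℂ (Set.range e) := by
    have h := Submodule.map_span (closedAdjoin e).val.toLinearMap (Set.range (closedAdjoinChar e))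
    rw [← Set.range_comp] at h
    exact congrArg SetLike.coe h
  exact Subtype.dense_iff.2 (himage ▸ (coe_closedAdjoin e).subset)

theorem contractiveSemicharacters_closedAdjoinChar (e : AddChar G B) :
    contractiveSemicharacters (closedAdjoinChar e) = contractiveSemicharacters e := by
  have hnorm : ∀ (s : Finset G) (c : G → ℂ),
      ‖∑ g ∈ s, c g • closedAdjoinChar e g‖ = ‖∑ g ∈ s, c g • e g‖ := fun s c =>
    congrArg norm (map_sum (closedAdjoin e).val (fun g => c g • closedAdjoinChar e g) s)
  simp only [contractiveSemicharacters, hnorm]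

variable [NormOneClass B] [CompleteSpace B]

/-- The maximal ideal space of `closedAdjoin e` is the space of contractive semicharacters. -/
def characterSpaceClosedAdjoinHomeomorph (e : AddChar G B) :
    WeakDual.characterSpace ℂ (closedAdjoin e) ≃ₜ contractiveSemicharacters e :=
  have : CompleteSpace (closedAdjoin e) :=
    (Subalgebra.isClosed_topologicalClosure _).completeSpace_coe
  have : NormOneClass (closedAdjoin e) := ⟨norm_one (α := B)⟩
  (characterSpaceHomeomorphContractiveSemicharacters (dense_span_range_closedAdjoinChar e)).trans
    (.setCongr (contractiveSemicharacters_closedAdjoinChar e))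

end ClosedAdjoin

section MaximalIdealSpace

variable {k : ℕ} {A : Subalgebra ℂ (APB k)}

theorem character_mem_apCharacters (φ : WeakDual.characterSpace ℂ A) :
    (fun f : ↥(A : Set (APB k)) => φ ⟨f, f.2⟩) ∈ apCharacters k A := by
  refine ⟨fun h => ?_, fun f g _ => map_add φ ⟨f, f.2⟩ ⟨g, g.2⟩,
    fun c f _ => map_smul φ c ⟨f, f.2⟩, fun f g _ => map_mul φ ⟨f, f.2⟩ ⟨g, g.2⟩⟩
  exact one_ne_zero ((map_one φ).symm.trans (congrFun h ⟨1, A.one_mem⟩))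

theorem exists_algHom_of_mem_apCharacters {φ : ↥(A : Set (APB k)) → ℂ}
    (hφ : φ ∈ apCharacters k A) : ∃ ψ : A →ₐ[ℂ] ℂ, ⇑ψ = φ := by
  obtain ⟨hne, hadd, hsmul, hmul⟩ := hφ
  let L : A →ₗ[ℂ] ℂ :=
    { toFun := φ
      map_add' := fun f g => hadd f g (A.add_mem f.2 g.2)
      map_smul' := fun c f => hsmul c f (A.smul_mem f.2 c) }
  have hmulL : ∀ f g, L (f * g) = L f * L g := fun f g => hmul f g (A.mul_mem f.2 g.2)
  obtain ⟨f, hf⟩ : ∃ f, L f ≠ 0 := Function.ne_iff.1 hne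
  have hone : L 1 = 1 := mul_left_cancel₀ hf (by rw [← hmulL, mul_one, mul_one])
  exact ⟨AlgHom.ofLinearMap L hone hmulL, rfl⟩

/-- The maximal ideal space of a closed subalgebra, realised inside the functions on the carrier,
agrees with the character space in the weak-* dual. -/
def characterSpaceHomeomorphApCharacters (hA : IsClosed (A : Set (APB k))) :
    WeakDual.characterSpace ℂ A ≃ₜ apCharacters k A :=
  have : CompleteSpace A := hA.completeSpace_coe
  have : NormOneClass A := ⟨norm_one (α := APB k)⟩
  let forget : WeakDual.characterSpace ℂ A → apCharacters k A :=
    fun φ => ⟨fun f => φ ⟨f, f.2⟩, character_mem_apCharacters φ⟩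
  have hcont : Continuous forget := Continuous.subtype_mk
    (continuous_pi fun f : ↥(A : Set (APB k)) =>
      (WeakDual.eval_continuous (⟨f, f.2⟩ : A)).comp continuous_subtype_val) _
  have hinj : Function.Injective forget := fun φ ψ h =>
    WeakDual.CharacterSpace.ext fun f => congrFun (congrArg Subtype.val h) f
  have hsurj : Function.Surjective forget := fun φ => by
    obtain ⟨ψ, hψ⟩ := exists_algHom_of_mem_apCharacters φ.2
    exact ⟨WeakDual.CharacterSpace.equivAlgHom.symm ψ, Subtype.ext hψ⟩
  Continuous.homeoOfEquivCompactToT2 (f := .ofBijective forget ⟨hinj, hsurj⟩) hcont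

end MaximalIdealSpace

section Exponentials

theorem apExp_apply (k : ℕ) (lam x : Fin k → ℝ) :
    apExp k lam x = Complex.exp (Complex.I * ((lam ⬝ᵥ x : ℝ) : ℂ)) := rfl

theorem norm_apExp_apply (k : ℕ) (lam x : Fin k → ℝ) : ‖apExp k lam x‖ = 1 := by
  rw [apExp_apply, mul_comm, Complex.norm_exp_ofReal_mul_I]

theorem norm_apExp_le (k : ℕ) (lam : Fin k → ℝ) : ‖apExp k lam‖ ≤ 1 :=
  (BoundedContinuousFunction.norm_le zero_le_one).2 fun x => (norm_apExp_apply k lam x).le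

theorem apExp_apply_add (k : ℕ) (lam x y : Fin k → ℝ) :
    apExp k lam (x + y) = apExp k lam x * apExp k lam y := by
  simp only [apExp_apply, dotProduct_add, Complex.ofReal_add, mul_add, Complex.exp_add]

theorem apExp_neg_apply (k : ℕ) (lam x : Fin k → ℝ) :
    apExp k (-lam) x = (starRingEnd ℂ) (apExp k lam x) := by
  simp [apExp_apply, ← Complex.exp_conj]

/-- The exponentials `λ ↦ e_λ` as an additive character. -/
def apExpChar (k : ℕ) : AddChar (Fin k → ℝ) (APB k) where
  toFun := apExp k
  map_zero_eq_one' := by ext x; simp [apExp_apply]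
  map_add_eq_mul' lam mu := by
    ext x
    simp only [BoundedContinuousFunction.mul_apply, apExp_apply, add_dotProduct,
      Complex.ofReal_add, mul_add, Complex.exp_add]

theorem apExp_zero (k : ℕ) : apExp k 0 = 1 := (apExpChar k).map_zero_eq_one

theorem apExp_add (k : ℕ) (lam mu : Fin k → ℝ) :
    apExp k (lam + mu) = apExp k lam * apExp k mu := (apExpChar k).map_add_eq_mul lam mu

/-- The exponentials with frequencies in an additive submonoid `M`. -/
def apExpCharOn {k : ℕ} (M : AddSubmonoid (Fin k → ℝ)) : AddChar M (APB k) :=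
  (apExpChar k).compAddMonoidHom M.subtype

theorem apExpCharOn_apply {k : ℕ} (M : AddSubmonoid (Fin k → ℝ)) (m : M) :
    apExpCharOn M m = apExp k m := rfl

theorem sum_smul_apExp_apply {ι : Type*} (k : ℕ) (s : Finset ι) (c : ι → ℂ)
    (freq : ι → Fin k → ℝ) (x : Fin k → ℝ) :
    (∑ i ∈ s, c i • apExp k (freq i)) x = ∑ i ∈ s, c i * apExp k (freq i) x := by
  simp [BoundedContinuousFunction.sum_apply]

theorem norm_sum_mul_apExp_apply_smul_le {ι : Type*} (k : ℕ) (s : Finset ι) (c : ι → ℂ)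
    (freq : ι → Fin k → ℝ) (x : Fin k → ℝ) :
    ‖∑ i ∈ s, (c i * apExp k (freq i) x) • apExp k (freq i)‖ ≤
      ‖∑ i ∈ s, c i • apExp k (freq i)‖ := by
  refine (BoundedContinuousFunction.norm_le (norm_nonneg _)).2 fun y => ?_
  -- the left-hand sum is the translate by `x` of the right-hand one
  have h := (∑ i ∈ s, c i • apExp k (freq i)).norm_coe_le_norm (x + y)
  rw [sum_smul_apExp_apply] at h ⊢
  simpa only [apExp_apply_add, mul_assoc] using h

end Exponentials

section SemicharacterMonoid

variable {k : ℕ} (M : AddSubmonoid (Fin k → ℝ))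

theorem one_mem_contractiveSemicharacters :
    1 ∈ contractiveSemicharacters (apExpCharOn M) := by
  refine ⟨rfl, fun _ _ => (mul_one _).symm, fun s c => ?_⟩
  have h := (∑ m ∈ s, c m • apExp k m).norm_coe_le_norm 0
  rw [sum_smul_apExp_apply] at h
  simpa [apExp_apply, apExpCharOn_apply] using h

variable {M}

theorem norm_sum_mul_smul_apExp_le {χ : M → ℂ}
    (hχ : χ ∈ contractiveSemicharacters (apExpCharOn M)) (s : Finset M) (c : M → ℂ) :
    ‖∑ m ∈ s, (c m * χ m) • apExp k m‖ ≤ ‖∑ m ∈ s, c m • apExp k m‖ := by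
  refine (BoundedContinuousFunction.norm_le (norm_nonneg _)).2 fun x => ?_
  rw [sum_smul_apExp_apply]
  simp only [mul_right_comm _ (χ _)]
  exact (hχ.2.2 s fun m => c m * apExp k m x).trans
    (norm_sum_mul_apExp_apply_smul_le k s c (↑) x)

theorem mul_mem_contractiveSemicharacters {χ ψ : M → ℂ}
    (hχ : χ ∈ contractiveSemicharacters (apExpCharOn M))
    (hψ : ψ ∈ contractiveSemicharacters (apExpCharOn M)) :
    χ * ψ ∈ contractiveSemicharacters (apExpCharOn M) := by
  refine ⟨by simp [hχ.1, hψ.1], fun m n => ?_, fun s c => ?_⟩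
  · simp only [Pi.mul_apply, hχ.2.1, hψ.2.1, mul_mul_mul_comm]
  · refine le_trans ?_ (norm_sum_mul_smul_apExp_le hχ s c)
    simpa only [Pi.mul_apply, mul_assoc, apExpCharOn_apply] using hψ.2.2 s fun m => c m * χ m

variable (M) in
/-- The contractive semicharacters of `M`, for the exponentials with frequencies in `M`, as a
monoid under pointwise multiplication. -/
def semicharacterMonoid : Submonoid (M → ℂ) where
  carrier := contractiveSemicharacters (apExpCharOn M)
  one_mem' := one_mem_contractiveSemicharacters M
  mul_mem' := mul_mem_contractiveSemicharacters

end SemicharacterMonoid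

theorem contractibleSpace_of_joined_one {N : Type*} [TopologicalSpace N] [Monoid N]
    [ContinuousMul N] {z : N} (hz : ∀ x, z * x = z) (h : Joined 1 z) : ContractibleSpace N := by
  obtain ⟨γ⟩ := h
  rw [contractible_iff_id_nullhomotopic]
  exact ⟨z, ⟨⟨⟨fun p => γ p.1 * p.2, by fun_prop⟩, fun x => by simp, fun x => by simp [hz]⟩⟩⟩

section Damping

theorem norm_sum_mul_exp_neg_le_of_le_on_imaginary_axis {ι : Type*} (s : Finset ι) (c : ι → ℂ)
    (b : ι → ℝ) (hb : ∀ i ∈ s, c i ≠ 0 → 0 ≤ b i) {K : ℝ}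
    (hK : ∀ y : ℝ, ‖∑ i ∈ s, c i * Complex.exp (-(b i * (y * Complex.I)))‖ ≤ K)
    {t : ℝ} (ht : 0 ≤ t) : ‖∑ i ∈ s, c i * Complex.exp (-(b i * t))‖ ≤ K := by
  let F : ℂ → ℂ := fun z => ∑ i ∈ s, c i * Complex.exp (-(b i * z))
  have hbound : ∀ z : ℂ, 0 ≤ z.re → ‖F z‖ ≤ ∑ i ∈ s, ‖c i‖ := fun z hz => by
    refine norm_sum_le_of_le s fun i hi => ?_
    by_cases hci : c i = 0
    · simp [hci]
    · rw [norm_mul, Complex.norm_exp]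
      refine mul_le_of_le_one_right (norm_nonneg _) (Real.exp_le_one_iff.2 ?_)
      simpa using mul_nonneg (hb i hi hci) hz
  have hdiff : Differentiable ℂ F := by
    simp only [F]
    fun_prop
  refine PhragmenLindelof.right_half_plane_of_bounded_on_real (f := F) (z := (t : ℂ))
    hdiff.diffContOnCl ⟨1, one_lt_two, 0, ?_⟩ ?_ hK (by simpa using ht)
  · refine Asymptotics.IsBigO.of_bound (∑ i ∈ s, ‖c i‖) ?_
    filter_upwards [mem_inf_of_right (mem_principal_self _)] with z hz
    simpa using hbound z (le_of_lt hz)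
  · refine isBoundedUnder_of_eventually_le (a := ∑ i ∈ s, ‖c i‖) ?_
    filter_upwards [eventually_ge_atTop 0] with x hx
    exact hbound x (by simpa using hx)

variable {k : ℕ} {M : AddSubmonoid (Fin k → ℝ)} {χ : M → ℂ} {f : Module.Dual ℝ (Fin k → ℝ)}

theorem exists_exp_neg_dual_mul_I_eq_apExp_apply (f : Module.Dual ℝ (Fin k → ℝ)) (y : ℝ) :
    ∃ x, ∀ lam, Complex.exp (-(f lam * (y * Complex.I))) = apExp k lam x := by
  refine ⟨-y • (dotProductEquiv ℝ (Fin k)).symm f, fun lam => ?_⟩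
  have hf : f lam = lam ⬝ᵥ (dotProductEquiv ℝ (Fin k)).symm f := by
    rw [dotProduct_comm, ← dotProductEquiv_apply_apply, LinearEquiv.apply_symm_apply]
  rw [apExp_apply, dotProduct_smul, smul_eq_mul, ← hf]
  push_cast
  ring_nf

theorem mul_exp_neg_mem_contractiveSemicharacters
    (hχ : χ ∈ contractiveSemicharacters (apExpCharOn M))
    (hf : ∀ m, χ m ≠ 0 → 0 ≤ f m) {t : ℝ} (ht : 0 ≤ t) :
    (fun m : M => χ m * Complex.exp (-(f m * t))) ∈
      contractiveSemicharacters (apExpCharOn M) := by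
  refine ⟨by simp [hχ.1], fun m n => ?_, fun s c => ?_⟩
  · simp only [hχ.2.1, AddSubmonoid.coe_add, map_add]
    rw [mul_mul_mul_comm, ← Complex.exp_add]
    push_cast
    ring_nf
  · simp only [← mul_assoc]
    refine norm_sum_mul_exp_neg_le_of_le_on_imaginary_axis s (fun m => c m * χ m) (fun m => f m)
      (fun m _ hm => hf m (right_ne_zero_of_mul hm)) (fun y => ?_) ht
    obtain ⟨x, hx⟩ := exists_exp_neg_dual_mul_I_eq_apExp_apply f y
    simp only [hx, mul_right_comm _ (χ _)]
    exact (hχ.2.2 s fun m => c m * apExp k m x).trans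
      (norm_sum_mul_apExp_apply_smul_le k s c (↑) x)

/-- The multipliers `χ m * r ^ f m` for `0 < r ≤ 1`, extended continuously to `r = 0`; the absolute
value only matters where `χ` vanishes. -/
def damped (χ : M → ℂ) (f : Module.Dual ℝ (Fin k → ℝ)) (r : ℝ) : M → ℂ :=
  fun m => χ m * ((r ^ |f m| : ℝ) : ℂ)

theorem continuous_damped (χ : M → ℂ) (f : Module.Dual ℝ (Fin k → ℝ)) :
    Continuous (damped χ f) :=
  continuous_pi fun _ => continuous_const.mul
    (Complex.continuous_ofReal.comp (Real.continuous_rpow_const (abs_nonneg _)))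

theorem damped_mem_contractiveSemicharacters_of_pos
    (hχ : χ ∈ contractiveSemicharacters (apExpCharOn M))
    (hf : ∀ m, χ m ≠ 0 → 0 ≤ f m) {r : ℝ} (hr : r ∈ Set.Ioc 0 1) :
    damped χ f r ∈ contractiveSemicharacters (apExpCharOn M) := by
  convert mul_exp_neg_mem_contractiveSemicharacters hχ hf
    (neg_nonneg.2 (Real.log_nonpos hr.1.le hr.2)) using 2 with m
  by_cases hm : χ m = 0
  · simp [damped, hm]
  · rw [damped, abs_of_nonneg (hf m hm), Real.rpow_def_of_pos hr.1]
    push_cast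
    ring_nf

theorem joinedIn_damped_zero (hχ : χ ∈ contractiveSemicharacters (apExpCharOn M))
    (hf : ∀ m, χ m ≠ 0 → 0 ≤ f m) :
    JoinedIn (contractiveSemicharacters (apExpCharOn M)) χ (damped χ f 0) := by
  refine (JoinedIn.ofLine (continuous_damped χ f).continuousOn rfl (by ext m; simp [damped])
    ?_).symm
  rintro _ ⟨r, hr, rfl⟩
  rw [unitInterval, ← closure_Ioc (zero_ne_one (α := ℝ))] at hr
  rw [← (isClosed_contractiveSemicharacters _).closure_eq]
  exact map_mem_closure (continuous_damped χ f) hr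
    fun s hs => damped_mem_contractiveSemicharacters_of_pos hχ hf hs

end Damping

section PathToBot

variable {k : ℕ}

/-- The indicator function, on the frequencies in `M`, of a linear subspace. -/
def subspaceIndicator (M : AddSubmonoid (Fin k → ℝ)) (W : Submodule ℝ (Fin k → ℝ)) : M → ℂ :=
  Set.indicator {m | (m : Fin k → ℝ) ∈ W} 1

variable {M : AddSubmonoid (Fin k → ℝ)}

theorem subspaceIndicator_top : subspaceIndicator M ⊤ = 1 := by
  simp [subspaceIndicator]

theorem subspaceIndicator_bot_mul {χ : M → ℂ} (hχ : χ 0 = 1) :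
    subspaceIndicator M ⊥ * χ = subspaceIndicator M ⊥ := by
  ext m
  by_cases hm : m = 0
  · simp [hm, hχ]
  · simp [subspaceIndicator, hm]

theorem damped_subspaceIndicator_zero (W : Submodule ℝ (Fin k → ℝ))
    (f : Module.Dual ℝ (Fin k → ℝ)) :
    damped (subspaceIndicator M W) f 0 = subspaceIndicator M (W ⊓ LinearMap.ker f) := by
  ext m
  by_cases hW : (m : Fin k → ℝ) ∈ W <;> by_cases hf : f m = 0 <;>
    simp [damped, subspaceIndicator, hW, hf, Real.zero_rpow]

theorem joinedIn_subspaceIndicator_bot {C : PointedCone ℝ (Fin k → ℝ)}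
    (hC : (C : ConvexCone ℝ (Fin k → ℝ)).Salient) (hMC : ∀ m : M, (m : Fin k → ℝ) ∈ C)
    (W : Submodule ℝ (Fin k → ℝ))
    (hW : subspaceIndicator M W ∈ contractiveSemicharacters (apExpCharOn M)) :
    JoinedIn (contractiveSemicharacters (apExpCharOn M)) (subspaceIndicator M W)
      (subspaceIndicator M ⊥) := by
  induction W using WellFoundedLT.induction with
  | ind W ih =>
    obtain rfl | hbot := eq_or_ne W ⊥
    · exact JoinedIn.refl hW
    · obtain ⟨f, hf, w, hwW, hfw⟩ := exists_dual_nonneg_on_submodule_of_salient hC hbot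
      have hstep := joinedIn_damped_zero hW
        fun m hm => hf m (hMC m)
          (Set.mem_of_indicator_ne_zero (s := {m : M | (m : Fin k → ℝ) ∈ W}) hm)
      rw [damped_subspaceIndicator_zero] at hstep
      have hlt : W ⊓ LinearMap.ker f < W :=
        inf_le_left.lt_of_not_ge fun hle => hfw (hle hwW).2
      exact hstep.trans (ih _ hlt hstep.target_mem)

theorem contractibleSpace_contractiveSemicharacters {C : PointedCone ℝ (Fin k → ℝ)}
    (hC : (C : ConvexCone ℝ (Fin k → ℝ)).Salient) (hMC : ∀ m : M, (m : Fin k → ℝ) ∈ C) :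
    ContractibleSpace (contractiveSemicharacters (apExpCharOn M)) := by
  have hjoined := joinedIn_subspaceIndicator_bot hC hMC ⊤
    (subspaceIndicator_top (M := M) ▸ one_mem_contractiveSemicharacters M)
  rw [subspaceIndicator_top] at hjoined
  exact contractibleSpace_of_joined_one (N := semicharacterMonoid M)
    (z := ⟨subspaceIndicator M ⊥, hjoined.target_mem⟩)
    (fun χ => Subtype.ext (subspaceIndicator_bot_mul χ.2.1)) hjoined.joined_subtype

end PathToBot

section UniformlyBoundedOperators

variable {𝕜 E F ι : Type*} [NormedField 𝕜] [SeminormedAddCommGroup E] [NormedSpace 𝕜 E]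
  [SeminormedAddCommGroup F] [NormedSpace 𝕜 F] {l : Filter ι} {L : ι → E →ₗ[𝕜] F} {C : ℝ}
  {s : Set E} {x : E}

theorem tendsto_zero_of_mem_closure_span (hL : ∀ᶠ i in l, ∀ x, ‖L i x‖ ≤ C * ‖x‖)
    (hs : ∀ x ∈ s, Tendsto (fun i => L i x) l (𝓝 0))
    (hx : x ∈ closure (Submodule.span 𝕜 s : Set E)) : Tendsto (fun i => L i x) l (𝓝 0) := by
  have hspan : ∀ y ∈ Submodule.span 𝕜 s, Tendsto (fun i => L i y) l (𝓝 0) := fun y hy => by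
    induction hy using Submodule.span_induction with
    | mem y hy => exact hs y hy
    | zero => simpa using tendsto_const_nhds
    | add y z _ _ hy hz => simpa using hy.add hz
    | smul c y _ hy => simpa using hy.const_smul c
  rw [NormedAddGroup.tendsto_nhds_zero]
  intro ε hε
  have hnear : ∀ᶠ p in 𝓝 x, C * ‖x - p‖ < ε / 2 :=
    ContinuousAt.eventually_lt (by fun_prop) continuousAt_const (by simpa using half_pos hε)
  obtain ⟨p, hp, hxp⟩ := ((mem_closure_iff_frequently.1 hx).and_eventually hnear).exists
  filter_upwards [hL, NormedAddGroup.tendsto_nhds_zero.1 (hspan p hp) (ε / 2) (half_pos hε)]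
    with i hi hip
  calc ‖L i x‖ = ‖L i (x - p) + L i p‖ := by rw [← map_add, sub_add_cancel]
    _ ≤ ‖L i (x - p)‖ + ‖L i p‖ := norm_add_le _ _
    _ < ε := by linarith [hi (x - p)]

theorem exists_tendsto_of_mem_closure_span [CompleteSpace F] [l.NeBot]
    (hL : ∀ᶠ i in l, ∀ x, ‖L i x‖ ≤ C * ‖x‖) (hs : ∀ x ∈ s, ∃ y, Tendsto (fun i => L i x) l (𝓝 y))
    (hx : x ∈ closure (Submodule.span 𝕜 s : Set E)) : ∃ y, Tendsto (fun i => L i x) l (𝓝 y) := by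
  have hdiff : Tendsto (fun p : ι × ι => (L p.2 - L p.1) x) (l ×ˢ l) (𝓝 0) := by
    refine tendsto_zero_of_mem_closure_span (C := C + C) ?_ (fun x hx => ?_) hx
    · filter_upwards [tendsto_fst.eventually hL, tendsto_snd.eventually hL] with p h₁ h₂ x
      rw [LinearMap.sub_apply, add_mul]
      exact (norm_sub_le _ _).trans (add_le_add (h₂ x) (h₁ x))
    · obtain ⟨y, hy⟩ := hs x hx
      simpa using (hy.comp tendsto_snd).sub (hy.comp tendsto_fst)
  refine cauchy_map_iff_exists_tendsto.1 (cauchy_map_iff.2 ⟨‹_›, ?_⟩)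
  rw [uniformity_eq_comap_nhds_zero, tendsto_comap_iff]
  exact hdiff

end UniformlyBoundedOperators

section FolnerSets

open scoped Pointwise

theorem exists_card_succ_le_of_polynomial_growth {c : ℕ → ℕ} {d : ℕ} (h0 : 0 < c 0)
    (hc : ∀ n, c n ≤ (n + 1) ^ d) {δ : ℝ} (hδ : 0 < δ) :
    ∃ n, (c (n + 1) : ℝ) ≤ (1 + δ) * c n := by
  by_contra! h
  have hexp : ∀ n, (1 + δ) ^ n ≤ (c n : ℝ) := fun n => by
    induction n with
    | zero => simpa using Nat.one_le_iff_ne_zero.2 h0.ne'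
    | succ n ih =>
      rw [pow_succ']
      exact (mul_le_mul_of_nonneg_left ih (by positivity)).trans (h n).le
  have hlim := (tendsto_pow_const_div_const_pow_of_one_lt d (by linarith : 1 < 1 + δ)).comp
    (tendsto_add_atTop_nat 1)
  obtain ⟨n, hn⟩ := (hlim.eventually (gt_mem_nhds (by positivity : 0 < (1 + δ)⁻¹))).exists
  rw [Function.comp_apply, div_lt_iff₀ (by positivity), pow_succ',
    inv_mul_cancel_left₀ (by positivity)] at hn
  exact (hn.trans_le (hexp n)).not_ge (by exact_mod_cast hc n)

variable {V : Type*} [DecidableEq V]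

theorem nsmul_pair_zero_subset [AddCommMonoid V] (a : V) (n : ℕ) :
    n • ({0, a} : Finset V) ⊆ (Finset.range (n + 1)).image (· • a) := by
  induction n with
  | zero => rw [zero_nsmul, Finset.zero_subset]; simp
  | succ n ih =>
    rw [succ_nsmul]
    refine (Finset.add_subset_add_right ih).trans (Finset.add_subset_iff.2 fun x hx y hy => ?_)
    obtain ⟨j, hj, rfl⟩ := Finset.mem_image.1 hx
    rw [Finset.mem_range] at hj
    rw [Finset.mem_insert, Finset.mem_singleton] at hy
    obtain rfl | rfl := hy
    · exact Finset.mem_image.2 ⟨j, Finset.mem_range.2 (by omega), (add_zero _).symm⟩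
    · exact Finset.mem_image.2 ⟨j + 1, Finset.mem_range.2 (by omega), succ_nsmul y j⟩

theorem card_nsmul_insert_zero_le [AddCommMonoid V] (L : Finset V) (n : ℕ) :
    (n • insert 0 L).card ≤ (n + 1) ^ L.card := by
  induction L using Finset.induction_on with
  | empty => simp
  | insert a L ha ih =>
    have hsub : insert 0 (insert a L) ⊆ {0, a} + insert 0 L := by
      refine Finset.insert_subset ?_ (Finset.insert_subset ?_ fun x hx => ?_)
      · exact Finset.mem_add.2 ⟨0, by simp, 0, by simp, add_zero 0⟩
      · exact Finset.mem_add.2 ⟨a, by simp, 0, by simp, add_zero a⟩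
      · exact Finset.mem_add.2 ⟨0, by simp, x, by simp [hx], zero_add x⟩
    calc (n • insert 0 (insert a L)).card ≤ (n • ({0, a} + insert 0 L)).card :=
          Finset.card_le_card (Finset.nsmul_subset_nsmul_left hsub)
      _ ≤ (n • ({0, a} : Finset V)).card * (n • insert 0 L).card := by
          rw [nsmul_add]
          exact Finset.card_add_le
      _ ≤ (n + 1) * (n + 1) ^ L.card := by
          refine Nat.mul_le_mul ?_ ih
          simpa using (Finset.card_le_card (nsmul_pair_zero_subset a n)).trans Finset.card_image_le
      _ = (n + 1) ^ (insert a L).card := by rw [Finset.card_insert_of_notMem ha, pow_succ']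

variable [AddCommGroup V]

theorem exists_folner_set (L : Finset V) {δ : ℝ} (hδ : 0 < δ) :
    ∃ F : Finset V, F.Nonempty ∧ ∀ a ∈ L, (1 - δ) * F.card ≤ (F ∩ (a +ᵥ F)).card := by
  let A : Finset V := insert 0 L
  have hne : ∀ n, (n • A).Nonempty := fun n => (Finset.insert_nonempty 0 L).nsmul
  obtain ⟨n, hn⟩ := exists_card_succ_le_of_polynomial_growth (c := fun n => (n • A).card)
    (hne 0).card_pos (card_nsmul_insert_zero_le L) hδ
  refine ⟨n • A, hne n, fun a ha => ?_⟩
  have hunion : n • A ∪ (a +ᵥ n • A) ⊆ (n + 1) • A := by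
    refine Finset.union_subset ?_ ?_
    · exact Finset.nsmul_subset_nsmul_right (Finset.mem_insert_self 0 L) n.le_succ
    · rw [succ_nsmul']
      exact Finset.vadd_finset_subset_vadd (Finset.mem_insert_of_mem ha)
  have hcard := Finset.card_union_add_card_inter (n • A) (a +ᵥ n • A)
  rw [Finset.card_vadd_finset] at hcard
  have hle : ((n • A).card + (n • A).card : ℝ) ≤
      ((n + 1) • A).card + (n • A ∩ (a +ᵥ n • A)).card := by
    exact_mod_cast hcard.symm.trans_le (Nat.add_le_add_right (Finset.card_le_card hunion) _)
  linarith

variable (V) in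
theorem exists_folner_net :
    ∃ F : Finset V × ℕ → Finset V,
      ∀ a : V, Tendsto (fun p => ((F p ∩ (a +ᵥ F p)).card / (F p).card : ℝ)) atTop (𝓝 1) := by
  choose F hne hF using fun p : Finset V × ℕ =>
    exists_folner_set p.1 (δ := 1 / ((p.2 : ℝ) + 1)) (by positivity)
  refine ⟨F, fun a => ?_⟩
  have hlim : Tendsto (fun p : Finset V × ℕ => 1 - 1 / ((p.2 : ℝ) + 1)) atTop (𝓝 1) := by
    rw [← prod_atTop_atTop_eq]
    simpa using ((tendsto_one_div_add_atTop_nhds_zero_nat (𝕜 := ℝ)).comp tendsto_snd).const_sub 1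
  refine tendsto_of_tendsto_of_tendsto_of_le_of_le' hlim tendsto_const_nhds ?_ ?_
  · filter_upwards [eventually_ge_atTop (({a} : Finset V), 0)] with p hp
    rw [le_div_iff₀ (by exact_mod_cast (hne p).card_pos)]
    exact hF p a (hp.1 (Finset.mem_singleton_self a))
  · refine Eventually.of_forall fun p => div_le_one_of_le₀ ?_ (by positivity)
    exact_mod_cast Finset.card_le_card Finset.inter_subset_left

end FolnerSets

section BoxMeans

variable {k : ℕ}

theorem integrableOn_box (k : ℕ) (T : ℝ) (f : APB k) :
    IntegrableOn f (Set.Icc (fun _ => -T : Fin k → ℝ) (fun _ => T)) :=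
  f.continuous.continuousOn.integrableOn_Icc

/-- The mean of a bounded continuous function over the box `[-T,T]^k`. -/
def boxMean (k : ℕ) (T : ℝ) : APB k →ₗ[ℂ] ℂ where
  toFun f := (((2 * T) ^ k : ℝ) : ℂ)⁻¹ *
    ∫ x in Set.Icc (fun _ => -T : Fin k → ℝ) (fun _ => T), f x
  map_add' f g := by
    simp only [BoundedContinuousFunction.add_apply]
    rw [integral_add (integrableOn_box k T f) (integrableOn_box k T g), mul_add]
  map_smul' c f := by
    simp only [BoundedContinuousFunction.smul_apply, smul_eq_mul, RingHom.id_apply]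
    rw [integral_const_mul]
    ring

theorem boxMean_apply (k : ℕ) (T : ℝ) (f : APB k) :
    boxMean k T f = (((2 * T) ^ k : ℝ) : ℂ)⁻¹ *
      ∫ x in Set.Icc (fun _ => -T : Fin k → ℝ) (fun _ => T), f x := rfl

theorem norm_boxMean_le_re {T : ℝ} (hT : 0 < T) (f g : APB k)
    (h : ∀ x, ‖f x‖ ≤ (g x).re) : ‖boxMean k T f‖ ≤ (boxMean k T g).re := by
  rw [boxMean_apply, boxMean_apply, ← Complex.ofReal_inv, Complex.re_ofReal_mul, norm_mul,
    Complex.norm_real, Real.norm_of_nonneg (by positivity)]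
  gcongr
  refine (norm_integral_le_integral_norm _).trans ?_
  rw [← RCLike.re_eq_complex_re, ← integral_re (integrableOn_box k T g)]
  exact integral_mono (integrableOn_box k T f).norm (integrableOn_box k T g).re h

theorem boxMean_one {T : ℝ} (hT : 0 < T) : boxMean k T 1 = 1 := by
  rw [boxMean_apply]
  simp only [BoundedContinuousFunction.coe_one, Pi.one_apply]
  rw [setIntegral_const, Measure.real, Real.volume_Icc_pi_toReal (fun _ => by linarith)]
  simp only [Finset.prod_const, Finset.card_univ, Fintype.card_fin, sub_neg_eq_add, ← two_mul]
  rw [Complex.real_smul, mul_one, inv_mul_cancel₀]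
  exact_mod_cast (by positivity : (2 * T) ^ k ≠ 0)

theorem norm_boxMean_le {T : ℝ} (hT : 0 < T) (f : APB k) : ‖boxMean k T f‖ ≤ ‖f‖ := by
  have h := norm_boxMean_le_re hT f ((‖f‖ : ℂ) • 1) fun x => by
    simpa using f.norm_coe_le_norm x
  rwa [map_smul, boxMean_one hT, smul_eq_mul, mul_one, Complex.ofReal_re] at h


theorem norm_integral_Icc_exp_le {c : ℝ} (hc : c ≠ 0) {T : ℝ} (hT : 0 ≤ T) :
    ‖∫ x in Set.Icc (-T) T, Complex.exp (Complex.I * ((c * x : ℝ) : ℂ))‖ ≤ 2 / |c| := by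
  have hIc : Complex.I * c ≠ 0 := mul_ne_zero Complex.I_ne_zero (by exact_mod_cast hc)
  have hnorm : ∀ x : ℝ, ‖Complex.exp (Complex.I * c * x)‖ = 1 := fun x => by
    rw [mul_assoc, mul_comm, ← Complex.ofReal_mul, Complex.norm_exp_ofReal_mul_I]
  rw [integral_Icc_eq_integral_Ioc, ← intervalIntegral.integral_of_le (by linarith)]
  simp only [Complex.ofReal_mul, ← mul_assoc]
  rw [integral_exp_mul_complex hIc, norm_div, norm_mul, Complex.norm_I, one_mul,
    Complex.norm_real, Real.norm_eq_abs]
  gcongr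
  refine (norm_sub_le _ _).trans ?_
  rw [hnorm, hnorm, one_add_one_eq_two]

theorem tendsto_interval_mean_exp (c : ℝ) :
    Tendsto (fun T : ℝ => ((2 * T : ℝ) : ℂ)⁻¹ *
      ∫ x in Set.Icc (-T) T, Complex.exp (Complex.I * ((c * x : ℝ) : ℂ))) atTop
      (𝓝 (if c = 0 then 1 else 0)) := by
  split_ifs with hc
  · refine tendsto_const_nhds.congr' ?_
    filter_upwards [eventually_gt_atTop 0] with T hT
    have h2T : ((2 * T : ℝ) : ℂ) ≠ 0 := by exact_mod_cast (by positivity : 2 * T ≠ 0)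
    simp only [hc, zero_mul, Complex.ofReal_zero, mul_zero, Complex.exp_zero, setIntegral_const,
      Real.volume_real_Icc, Complex.real_smul, mul_one]
    rw [max_eq_left (by linarith), sub_neg_eq_add, ← two_mul, inv_mul_cancel₀ h2T]
  · refine squeeze_zero_norm' (a := fun T : ℝ => (2 * T)⁻¹ * (2 / |c|)) ?_ ?_
    · filter_upwards [eventually_gt_atTop 0] with T hT
      rw [norm_mul, norm_inv, Complex.norm_real, Real.norm_of_nonneg (by positivity)]
      gcongr
      exact norm_integral_Icc_exp_le hc hT.le
    · have hlim : Tendsto (fun T : ℝ => (2 * T)⁻¹) atTop (𝓝 0) :=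
        (tendsto_id.const_mul_atTop two_pos).inv_tendsto_atTop
      simpa using hlim.mul_const (2 / |c|)

theorem tendsto_boxMean_apExp (lam : Fin k → ℝ) :
    Tendsto (fun T => boxMean k T (apExp k lam)) atTop (𝓝 (if lam = 0 then 1 else 0)) := by
  have hprod : ∀ T, boxMean k T (apExp k lam) = ∏ j, (((2 * T : ℝ) : ℂ)⁻¹ *
      ∫ x in Set.Icc (-T) T, Complex.exp (Complex.I * ((lam j * x : ℝ) : ℂ))) := fun T => by
    rw [boxMean_apply, Finset.prod_mul_distrib, Finset.prod_const, Finset.card_univ,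
      Fintype.card_fin, ← integral_fintype_prod_eq_prod, ← Measure.restrict_pi_pi,
      Set.pi_univ_Icc, Complex.ofReal_pow, inv_pow, volume_pi]
    simp only [apExp_apply, dotProduct, Complex.ofReal_sum, Finset.mul_sum, Complex.exp_sum]
  simp only [hprod]
  convert tendsto_finsetProd Finset.univ fun j _ => tendsto_interval_mean_exp (lam j) using 2
  rw [Finset.prod_ite_zero]
  simp [funext_iff]


theorem exists_tendsto_boxMean {f : APB k} (hf : f ∈ APalg k) :
    ∃ a, Tendsto (fun T => boxMean k T f) atTop (𝓝 a) := by
  have hbound : ∀ᶠ T in atTop, ∀ f : APB k, ‖boxMean k T f‖ ≤ 1 * ‖f‖ := by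
    filter_upwards [eventually_gt_atTop 0] with T hT f
    simpa only [one_mul] using norm_boxMean_le hT f
  refine exists_tendsto_of_mem_closure_span hbound ?_ ((coe_closedAdjoin (apExpChar k)).subset hf)
  rintro _ ⟨lam, rfl⟩
  exact ⟨_, tendsto_boxMean_apExp lam⟩

end BoxMeans

section BohrCoefficients

variable {k : ℕ}

theorem apExp_mem_APalg (lam : Fin k → ℝ) : apExp k lam ∈ APalg k :=
  apply_mem_closedAdjoin (apExpChar k) lam

theorem tendsto_boxMean_bohrCoeff {f : APB k} (hf : f ∈ APalg k) (lam : Fin k → ℝ) :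
    Tendsto (fun T => boxMean k T (apExp k (-lam) * f)) atTop (𝓝 (bohrCoeff k f lam)) := by
  have heq : bohrCoeff k f lam = limUnder atTop fun T => boxMean k T (apExp k (-lam) * f) := by
    simp only [bohrCoeff, boxMean_apply, BoundedContinuousFunction.mul_apply, apExp_apply,
      neg_dotProduct, Complex.ofReal_neg, mul_neg]
    rfl
  rw [heq]
  exact tendsto_nhds_limUnder (exists_tendsto_boxMean (mul_mem (apExp_mem_APalg (-lam)) hf))

theorem tendsto_boxMean_apExp_neg_mul_apExp (lam mu : Fin k → ℝ) :
    Tendsto (fun T => boxMean k T (apExp k (-lam) * apExp k mu)) atTop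
      (𝓝 (if lam = mu then 1 else 0)) := by
  rw [← apExp_add]
  simpa only [neg_add_eq_zero] using tendsto_boxMean_apExp (-lam + mu)

theorem bohrCoeff_apExp (mu lam : Fin k → ℝ) :
    bohrCoeff k (apExp k mu) lam = if lam = mu then 1 else 0 :=
  tendsto_nhds_unique (tendsto_boxMean_bohrCoeff (apExp_mem_APalg mu) lam)
    (tendsto_boxMean_apExp_neg_mul_apExp lam mu)

theorem bohrCoeff_eq_zero_of_mem_closure_span {Δ : Set (Fin k → ℝ)} {f : APB k}
    (hf : f ∈ closure (Submodule.span ℂ (apExp k '' Δ) : Set (APB k))) (hfAP : f ∈ APalg k)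
    {lam : Fin k → ℝ} (hlam : lam ∉ Δ) : bohrCoeff k f lam = 0 := by
  let L (T : ℝ) : APB k →ₗ[ℂ] ℂ := boxMean k T ∘ₗ LinearMap.mulLeft ℂ (apExp k (-lam))
  have hbound : ∀ᶠ T in atTop, ∀ g : APB k, ‖L T g‖ ≤ 1 * ‖g‖ := by
    filter_upwards [eventually_gt_atTop 0] with T hT g
    exact (norm_boxMean_le hT _).trans ((norm_mul_le _ _).trans
      (mul_le_mul_of_nonneg_right (norm_apExp_le k _) (norm_nonneg _)))
  refine tendsto_nhds_unique (tendsto_boxMean_bohrCoeff hfAP lam)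
    (tendsto_zero_of_mem_closure_span (L := L) hbound ?_ hf)
  rintro _ ⟨mu, hmu, rfl⟩
  have hne : lam ≠ mu := (ne_of_mem_of_not_mem hmu hlam).symm
  simpa [L, hne] using tendsto_boxMean_apExp_neg_mul_apExp lam mu

/-- The Bohr-Fourier coefficient at `lam` as a linear functional on `AP^k`. -/
def bohrCoeffLinear (lam : Fin k → ℝ) : APalg k →ₗ[ℂ] ℂ where
  toFun f := bohrCoeff k (f : APB k) lam
  map_add' f g := tendsto_nhds_unique (tendsto_boxMean_bohrCoeff (f + g).2 lam) <| by
    simpa [mul_add] using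
      (tendsto_boxMean_bohrCoeff f.2 lam).add (tendsto_boxMean_bohrCoeff g.2 lam)
  map_smul' c f := tendsto_nhds_unique (tendsto_boxMean_bohrCoeff (c • f).2 lam) <| by
    simpa using (tendsto_boxMean_bohrCoeff f.2 lam).const_mul c

end BohrCoefficients

section BochnerFejer

open scoped Pointwise

variable {k : ℕ}

/-- The Bochner-Fejér sum of an almost periodic function: its convolution, in the sense of mean
values, with the kernel `|∑_{μ ∈ F} e_μ|² / |F|`. -/
def fejerSum (F : Finset (Fin k → ℝ)) : APalg k →ₗ[ℂ] APB k :=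
  (F.card : ℂ)⁻¹ • ∑ mu ∈ F, ∑ nu ∈ F, (bohrCoeffLinear (mu - nu)).smulRight (apExp k (mu - nu))

theorem fejerSum_apply (F : Finset (Fin k → ℝ)) (f : APalg k) :
    fejerSum F f = (F.card : ℂ)⁻¹ • ∑ mu ∈ F, ∑ nu ∈ F,
      bohrCoeff k (f : APB k) (mu - nu) • apExp k (mu - nu) := by
  simp [fejerSum, bohrCoeffLinear]

theorem fejerSum_apExp (F : Finset (Fin k → ℝ)) (lam : Fin k → ℝ) :
    fejerSum F ⟨apExp k lam, apExp_mem_APalg lam⟩ =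
      (((F ∩ (lam +ᵥ F)).card / F.card : ℝ) : ℂ) • apExp k lam := by
  have hterm : ∀ mu nu, bohrCoeff k (apExp k lam) (mu - nu) • apExp k (mu - nu) =
      if nu = mu - lam then apExp k lam else 0 := fun mu nu => by
    rw [bohrCoeff_apExp]
    by_cases h : mu - nu = lam
    · simp [← h]
    · simp [h, mt (fun h' : nu = mu - lam => sub_eq_iff_eq_add.2 (by simp [h'])) h]
  have hmem : ∀ mu, mu - lam ∈ F ↔ mu ∈ lam +ᵥ F := fun mu => by
    rw [← Finset.neg_vadd_mem_iff, vadd_eq_add, sub_eq_neg_add]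
  simp only [fejerSum_apply, hterm, Finset.sum_ite_eq', hmem, ← Finset.sum_filter,
    Finset.filter_mem_eq_inter, Finset.sum_const, ← Nat.cast_smul_eq_nsmul ℂ, smul_smul]
  push_cast
  rw [inv_mul_eq_div]

/-- The kernel `y ↦ |∑_{μ ∈ F} e_μ(x - y)|² / |F|` whose mean value against `f` is the
Bochner-Fejér sum of `f` at `x`. -/
def fejerKernel (F : Finset (Fin k → ℝ)) (x : Fin k → ℝ) : APB k :=
  (F.card : ℂ)⁻¹ • ∑ mu ∈ F, ∑ nu ∈ F, apExp k (mu - nu) x • apExp k (-(mu - nu))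

theorem fejerKernel_apply (F : Finset (Fin k → ℝ)) (x y : Fin k → ℝ) :
    fejerKernel F x y = (((F.card : ℝ)⁻¹ * ‖∑ mu ∈ F, apExp k mu (x - y)‖ ^ 2 : ℝ) : ℂ) := by
  have hterm : ∀ mu nu, apExp k (mu - nu) x * apExp k (-(mu - nu)) y =
      apExp k mu (x - y) * (starRingEnd ℂ) (apExp k nu (x - y)) := fun mu nu => by
    rw [← apExp_neg_apply, ← BoundedContinuousFunction.mul_apply, ← apExp_add, ← sub_eq_add_neg,
      sub_eq_add_neg x y, apExp_apply_add]
    congr 1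
    simp [apExp_apply]
  rw [Complex.ofReal_mul, Complex.ofReal_pow, ← Complex.mul_conj', map_sum, Finset.sum_mul_sum]
  simp only [fejerKernel, BoundedContinuousFunction.smul_apply,
    BoundedContinuousFunction.sum_apply, smul_eq_mul, hterm, Complex.ofReal_inv,
    Complex.ofReal_natCast]

theorem tendsto_boxMean_fejerKernel_mul (F : Finset (Fin k → ℝ)) (x : Fin k → ℝ) (f : APalg k) :
    Tendsto (fun T => boxMean k T (fejerKernel F x * (f : APB k))) atTop (𝓝 (fejerSum F f x)) := by
  have hsum : fejerSum F f x = (F.card : ℂ)⁻¹ * ∑ mu ∈ F, ∑ nu ∈ F,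
      apExp k (mu - nu) x * bohrCoeff k (f : APB k) (mu - nu) := by
    simp [fejerSum_apply, BoundedContinuousFunction.sum_apply, mul_comm]
  simp only [hsum, fejerKernel, smul_mul_assoc, Finset.sum_mul, map_smul, map_sum, smul_eq_mul]
  exact (tendsto_finsetSum _ fun mu _ => tendsto_finsetSum _ fun nu _ =>
    (tendsto_boxMean_bohrCoeff f.2 (mu - nu)).const_mul _).const_mul _

theorem re_fejerSum_one_apply_le_one (F : Finset (Fin k → ℝ)) (x : Fin k → ℝ) :
    (fejerSum F 1 x).re ≤ 1 := by
  have hone : (1 : APalg k) = ⟨apExp k 0, apExp_mem_APalg 0⟩ := Subtype.ext (apExp_zero k).symm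
  rw [hone, fejerSum_apExp, apExp_zero, zero_vadd, Finset.inter_self]
  simpa using div_self_le_one (F.card : ℝ)

theorem norm_boxMean_fejerKernel_mul_le (F : Finset (Fin k → ℝ)) (x : Fin k → ℝ) (f : APB k)
    {T : ℝ} (hT : 0 < T) :
    ‖boxMean k T (fejerKernel F x * f)‖ ≤ ‖f‖ * (boxMean k T (fejerKernel F x)).re := by
  rw [← Complex.re_ofReal_mul, ← smul_eq_mul (‖f‖ : ℂ), ← map_smul]
  refine norm_boxMean_le_re hT _ _ fun y => ?_
  rw [BoundedContinuousFunction.mul_apply, BoundedContinuousFunction.smul_apply,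
    fejerKernel_apply, smul_eq_mul, ← Complex.ofReal_mul, Complex.ofReal_re, norm_mul,
    Complex.norm_real, Real.norm_of_nonneg (by positivity), mul_comm]
  gcongr
  exact f.norm_coe_le_norm y

theorem norm_fejerSum_le (F : Finset (Fin k → ℝ)) (f : APalg k) : ‖fejerSum F f‖ ≤ ‖f‖ := by
  refine (BoundedContinuousFunction.norm_le (norm_nonneg f)).2 fun x => ?_
  have hone : Tendsto (fun T => boxMean k T (fejerKernel F x)) atTop (𝓝 (fejerSum F 1 x)) := by
    simpa only [OneMemClass.coe_one, mul_one] using tendsto_boxMean_fejerKernel_mul F x 1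
  calc ‖fejerSum F f x‖ ≤ ‖f‖ * (fejerSum F 1 x).re := by
        refine le_of_tendsto_of_tendsto (tendsto_boxMean_fejerKernel_mul F x f).norm
          (((Complex.continuous_re.tendsto _).comp hone).const_mul ‖f‖) ?_
        filter_upwards [eventually_gt_atTop 0] with T hT
        exact norm_boxMean_fejerKernel_mul_le F x f hT
    _ ≤ ‖f‖ := mul_le_of_le_one_right (norm_nonneg f) (re_fejerSum_one_apply_le_one F x)

theorem tendsto_fejerSum {ι : Type*} {l : Filter ι} {F : ι → Finset (Fin k → ℝ)}
    (hF : ∀ a : Fin k → ℝ, Tendsto (fun i => ((F i ∩ (a +ᵥ F i)).card / (F i).card : ℝ)) l (𝓝 1))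
    (f : APalg k) : Tendsto (fun i => fejerSum (F i) f) l (𝓝 f) := by
  let incl : APalg k →ₗ[ℂ] APB k := (APalg k).val.toLinearMap
  have hbound : ∀ᶠ i in l, ∀ f, ‖(fejerSum (F i) - incl) f‖ ≤ 2 * ‖f‖ :=
    Eventually.of_forall fun i f => (norm_sub_le _ _).trans <|
      (add_le_add (norm_fejerSum_le (F i) f) le_rfl).trans_eq (two_mul ‖f‖).symm
  refine tendsto_sub_nhds_zero_iff.1 (tendsto_zero_of_mem_closure_span hbound ?_
    (dense_span_range_closedAdjoinChar (apExpChar k) f))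
  rintro _ ⟨lam, rfl⟩
  refine tendsto_sub_nhds_zero_iff.2 ?_
  have hlim := ((Complex.continuous_ofReal.tendsto _).comp (hF lam)).smul_const (apExp k lam)
  rw [Complex.ofReal_one, one_smul] at hlim
  exact hlim.congr fun i => (fejerSum_apExp (F i) lam).symm

theorem setOf_APmem_eq_closure_span (k : ℕ) (Δ : Set (Fin k → ℝ)) :
    {f | APmem k Δ f} = closure (Submodule.span ℂ (apExp k '' Δ) : Set (APB k)) := by
  refine Set.Subset.antisymm ?_ fun f hf => ?_
  · rintro f ⟨hf, hspec⟩
    obtain ⟨F, hF⟩ := exists_folner_net (Fin k → ℝ)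
    refine mem_closure_of_tendsto (tendsto_fejerSum hF ⟨f, hf⟩) (Eventually.of_forall fun p => ?_)
    rw [fejerSum_apply]
    refine Submodule.smul_mem _ _ (sum_mem fun mu _ => sum_mem fun nu _ => ?_)
    by_cases h : mu - nu ∈ Δ
    · exact Submodule.smul_mem _ _ (Submodule.subset_span (Set.mem_image_of_mem _ h))
    · rw [show bohrCoeff k f (mu - nu) = 0 from not_not.1 (mt (@hspec (mu - nu)) h), zero_smul]
      exact zero_mem _
  · have hfAP : f ∈ APalg k := (coe_closedAdjoin (apExpChar k)).superset
      (closure_mono (Submodule.span_mono (Set.image_subset_range _ _)) hf)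
    exact ⟨hfAP, fun lam hlam => by_contra fun h =>
      hlam (bohrCoeff_eq_zero_of_mem_closure_span hf hfAP h)⟩

end BochnerFejer

section Halfspaces

variable {k : ℕ}

theorem setOf_APmem_eq_closedAdjoin (M : AddSubmonoid (Fin k → ℝ)) :
    {f | APmem k M f} = closedAdjoin (apExpCharOn M) := by
  have hrange : Set.range (apExpCharOn M) = apExp k '' M := by
    rw [Set.image_eq_range]
    rfl
  rw [setOf_APmem_eq_closure_span, coe_closedAdjoin, hrange]

/-- The pointed cone underlying a halfspace. -/
def IsHalfspace.toPointedCone {S : Set (Fin k → ℝ)} (hS : IsHalfspace k S) :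
    PointedCone ℝ (Fin k → ℝ) where
  carrier := S
  add_mem' hx hy := hS.add_mem _ hx _ hy
  zero_mem' := (hS.inter.superset rfl).1
  smul_mem' a _ hx := hS.smul_mem _ hx a a.2

theorem IsHalfspace.salient_toPointedCone {S : Set (Fin k → ℝ)} (hS : IsHalfspace k S) :
    (hS.toPointedCone : ConvexCone ℝ (Fin k → ℝ)).Salient :=
  fun _ hx hx0 hnx => hx0 (hS.inter.subset ⟨hx, hnx⟩)

theorem ap_characterSpace_contractible_general {C : PointedCone ℝ (Fin k → ℝ)}
    (hC : (C : ConvexCone ℝ (Fin k → ℝ)).Salient) (M : AddSubmonoid (Fin k → ℝ))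
    (hMC : ∀ m ∈ M, m ∈ C) : ContractibleSpace ↥(apCharacters k {f | APmem k M f}) := by
  have : ContractibleSpace (contractiveSemicharacters (apExpCharOn M)) :=
    contractibleSpace_contractiveSemicharacters hC fun m => hMC m m.2
  rw [setOf_APmem_eq_closedAdjoin]
  have hclosed : IsClosed (closedAdjoin (apExpCharOn M) : Set (APB k)) :=
    Subalgebra.isClosed_topologicalClosure _
  exact ((characterSpaceHomeomorphApCharacters hclosed).symm.trans
    (characterSpaceClosedAdjoinHomeomorph (apExpCharOn M))).contractibleSpace

end Halfspaces

/-- **Contractibility of `M(AP^k_Σ)`** (Theorem 3.1 for `AP`).  Let `S ⊂ ℝ^k`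
be a halfspace and `Σ ⊆ S` an additive semigroup containing `0`.  Then the
maximal ideal space of `AP^k_Σ` is contractible. -/
theorem ap_characterSpace_contractible (k : ℕ) (S Sg : Set (Fin k → ℝ))
    (hS : IsHalfspace k S) (hSgS : Sg ⊆ S) (h0 : (0 : Fin k → ℝ) ∈ Sg)
    (hadd : ∀ x ∈ Sg, ∀ y ∈ Sg, x + y ∈ Sg) :
    ContractibleSpace ↥(apCharacters k {f | APmem k Sg f}) :=
  ap_characterSpace_contractible_general hS.salient_toPointedCone
    { carrier := Sg, zero_mem' := h0, add_mem' := fun hx hy => hadd _ hx _ hy } hSgS
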